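/- Let p be an odd prime and let u be an integer with u(u+1)(3u+1) not divisible by p. Then Σ_{k=0}^{p-1} C(2k,k) · a_k · (u/(9(1+u)^2))^k ≡ Σ_{k=0}^{p-1} C(2k,k)^2 · C(4k,2k) · (u/(9(1+3u)^4))^k (mod p). -/

import Mathlib

open Finset

/-- `a n = ∑_{k=0}^{n} C(n,k)^2·C(2k,k)`. -/
def a (n : ℕ) : ℕ :=
  ∑ k ∈ Finset.range (n + 1), Nat.choose n k ^ 2 * Nat.choose (2 * k) k

/-- reciprocal of `(n-k)!`, zero for `k > n` -/
def iF (n k : ℕ) : ℚ := if k ≤ n then 1 / ((n - k).factorial : ℚ) else 0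

lemma iF_succ (n k : ℕ) : iF n k = ((n : ℚ) + 1 - k) * iF (n + 1) k := by
  unfold iF
  by_cases h : k ≤ n
  · rw [if_pos h, if_pos (by omega)]
    obtain ⟨j, rfl⟩ := Nat.exists_eq_add_of_le h
    have e1 : k + j - k = j := by omega
    have e2 : k + j + 1 - k = j + 1 := by omega
    rw [e1, e2, Nat.factorial_succ]
    have : (j.factorial : ℚ) ≠ 0 := by positivity
    have h2 : (j : ℚ) + 1 ≠ 0 := by positivity
    push_cast
    field_simp
    ring
  · rw [if_neg h]
    by_cases h' : k ≤ n + 1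
    · have : k = n + 1 := by omega
      subst this
      push_cast
      ring
    · rw [if_neg h']; ring

lemma iF_ss (n k : ℕ) : iF (n + 1) (k + 1) = iF n k := by
  unfold iF
  simp

lemma iF_zero {n k : ℕ} (h : n < k) : iF n k = 0 := by
  unfold iF
  rw [if_neg (by omega)]

lemma choose_iF (n k : ℕ) : (n.choose k : ℚ) = n.factorial * iF n k / k.factorial := by
  unfold iF
  split_ifs with h
  · rw [Nat.cast_choose ℚ h]
    have : (k.factorial : ℚ) ≠ 0 := by positivity
    have : ((n - k).factorial : ℚ) ≠ 0 := by positivity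
    field_simp
  · rw [Nat.choose_eq_zero_of_lt (by omega)]; simp

lemma choose_central (k : ℕ) :
    ((2 * k).choose k : ℚ) = (2 * k).factorial / (k.factorial : ℚ) ^ 2 := by
  rw [Nat.cast_choose ℚ (by omega : k ≤ 2 * k)]
  have : 2 * k - k = k := by omega
  rw [this, sq]

/-- extension of a sum of terms that vanish beyond `n` -/
lemma sum_ext_range {n N : ℕ} (h : n + 1 ≤ N) (t : ℕ → ℚ) (ht : ∀ k, n < k → t k = 0) :
    ∑ k ∈ range (n + 1), t k = ∑ k ∈ range N, t k := by
  apply Finset.sum_subset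
  · intro x; simp; omega
  · intro x _ hx
    apply ht
    simp at hx
    omega

lemma tele {N : ℕ} (x y z G : ℕ → ℚ) (c1 c2 c3 : ℚ)
    (h : ∀ k, c1 * x k + c2 * y k + c3 * z k = G (k + 1) - G k)
    (h0 : G 0 = 0) (hN : G N = 0) :
    c1 * ∑ k ∈ range N, x k + c2 * ∑ k ∈ range N, y k + c3 * ∑ k ∈ range N, z k = 0 := by
  rw [Finset.mul_sum, Finset.mul_sum, Finset.mul_sum, ← Finset.sum_add_distrib,
    ← Finset.sum_add_distrib, Finset.sum_congr rfl (fun k _ => h k), Finset.sum_range_sub, h0, hN,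
    sub_zero]

/-! ### recurrence for `a` -/

def tA (n k : ℕ) : ℚ :=
  (n.factorial : ℚ) ^ 2 * iF n k ^ 2 * (2 * k).factorial / (k.factorial : ℚ) ^ 4

lemma a_eq (n : ℕ) : (a n : ℚ) = ∑ k ∈ range (n + 1), tA n k := by
  unfold a
  push_cast
  apply Finset.sum_congr rfl
  intro k _
  rw [choose_iF, choose_central, tA]
  have : (k.factorial : ℚ) ≠ 0 := by positivity
  field_simp

lemma two_fact (k : ℕ) : ((2 * (k + 1)).factorial : ℚ)
    = (2 * k + 2) * (2 * k + 1) * (2 * k).factorial := by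
  rw [show 2 * (k + 1) = 2 * k + 1 + 1 by ring, Nat.factorial_succ, Nat.factorial_succ]
  push_cast
  ring

lemma a_rec' (n : ℕ) : ((n : ℚ) + 2) ^ 2 * a (n + 2)
    + (-(10 * ((n : ℚ) + 1) ^ 2 + 10 * (n + 1) + 3)) * a (n + 1)
    + (9 * ((n : ℚ) + 1) ^ 2) * a n = 0 := by
  have hz : ∀ m k, m < k → tA m k = 0 := by
    intro m k h
    simp [tA, iF_zero h]
  rw [a_eq, a_eq, a_eq, sum_ext_range (N := n + 3) (by omega) _ (hz (n + 1)),
    sum_ext_range (N := n + 3) (by omega) _ (hz n)]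
  apply tele _ _ _ (fun k => (k : ℚ) ^ 3 * ((n + 1) ^ 2 * (3 * k - 4 - 4 * (n + 1))) *
    ((n.factorial : ℚ) ^ 2 * iF (n + 2) k ^ 2 * (2 * k).factorial / (k.factorial : ℚ) ^ 4))
  · intro k
    simp only [tA]
    rw [iF_ss (n + 1) k, iF_succ n k, iF_succ (n + 1) k, two_fact, Nat.factorial_succ (n + 1),
      Nat.factorial_succ n, Nat.factorial_succ k]
    have : (k.factorial : ℚ) ≠ 0 := by positivity
    have : (k : ℚ) + 1 ≠ 0 := by positivity
    push_cast
    field_simp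
    ring
  · simp
  · simp [iF_zero (show n + 2 < n + 3 by omega)]

lemma a_rec (k : ℕ) : ((k : ℚ) + 1) ^ 2 * a (k + 1)
    = (10 * (k : ℚ) ^ 2 + 10 * k + 3) * a k - 9 * (k : ℚ) ^ 2 * a (k - 1) := by
  cases k with
  | zero =>
    have h0 : a 0 = 1 := by decide
    have h1 : a 1 = 3 := by decide
    simp [h0, h1]
  | succ n =>
    have := a_rec' n
    push_cast
    rw [show n + 1 + 1 = n + 2 by ring]
    linear_combination this

/-! ### the two sums -/

def tX (n k : ℕ) : ℚ :=
  (-9) ^ n * (-1 / 9) ^ k * (n + k).factorial * iF n k / (k.factorial : ℚ) ^ 2 * a k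

def tS (n k : ℕ) : ℚ :=
  (-27) ^ n * (-1 / 27) ^ k * (n + 3 * k).factorial * iF n k / (k.factorial : ℚ) ^ 4

def sX (n : ℕ) : ℚ := ∑ k ∈ range (n + 1), tX n k
def sS (n : ℕ) : ℚ := ∑ k ∈ range (n + 1), tS n k

lemma sS_rec (n : ℕ) : ((n : ℚ) + 2) ^ 3 * sS (n + 2)
    + ((2 * (n + 1) + 1) * (7 * ((n : ℚ) + 1) ^ 2 + 7 * (n + 1) + 3)) * sS (n + 1)
    + (81 * ((n : ℚ) + 1) ^ 3) * sS n = 0 := by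
  have hz : ∀ m k, m < k → tS m k = 0 := by
    intro m k h
    simp [tS, iF_zero h]
  simp only [sS]
  rw [sum_ext_range (N := n + 3) (by omega) _ (hz (n + 1)),
    sum_ext_range (N := n + 3) (by omega) _ (hz n)]
  apply tele _ _ _ (fun k => (k : ℚ) ^ 4 * (432 * (n + 1) + 324) *
    ((-27) ^ (n + 1) * (-1 / 27) ^ k * (n + 3 * k).factorial * iF (n + 2) k
      / (k.factorial : ℚ) ^ 4))
  · intro k
    simp only [tS]
    rw [iF_ss (n + 1) k, iF_succ n k, iF_succ (n + 1) k, Nat.factorial_succ k]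
    rw [show n + 2 + 3 * k = n + 3 * k + 1 + 1 by ring, show n + 1 + 3 * k = n + 3 * k + 1 by ring,
      show n + 3 * (k + 1) = n + 3 * k + 1 + 1 + 1 by ring, Nat.factorial_succ (n + 3 * k + 1 + 1),
      Nat.factorial_succ (n + 3 * k + 1), Nat.factorial_succ (n + 3 * k)]
    have : (k.factorial : ℚ) ≠ 0 := by positivity
    have : (k : ℚ) + 1 ≠ 0 := by positivity
    rw [pow_succ (-1 / 27 : ℚ) k, pow_succ (-27 : ℚ) (n + 1), pow_succ (-27 : ℚ) n]
    generalize (-1 / 27 : ℚ) ^ k = w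
    generalize (-27 : ℚ) ^ n = z
    push_cast
    field_simp
    ring
  · simp
  · simp [iF_zero (show n + 2 < n + 3 by omega)]

lemma sX_rec (n : ℕ) : ((n : ℚ) + 2) ^ 3 * sX (n + 2)
    + ((2 * (n + 1) + 1) * (7 * ((n : ℚ) + 1) ^ 2 + 7 * (n + 1) + 3)) * sX (n + 1)
    + (81 * ((n : ℚ) + 1) ^ 3) * sX n = 0 := by
  have hz : ∀ m k, m < k → tX m k = 0 := by
    intro m k h
    simp [tX, iF_zero h]
  simp only [sX]
  rw [sum_ext_range (N := n + 3) (by omega) _ (hz (n + 1)),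
    sum_ext_range (N := n + 3) (by omega) _ (hz n)]
  apply tele _ _ _ (fun k => (k : ℚ) ^ 2 * (36 * (n + 1) + 18) *
    ((-9) ^ (n + 1) * (-1 / 9) ^ k * (n + k).factorial * iF (n + 2) k
      / (k.factorial : ℚ) ^ 2) * (k ^ 2 * a k + (n + 2 - k) * (n + 1 + k) * a (k - 1)))
  · intro k
    have hr := a_rec k
    simp only [tX]
    rw [iF_ss (n + 1) k, iF_succ n k, iF_succ (n + 1) k, Nat.factorial_succ k]
    rw [show n + 2 + k = n + k + 1 + 1 by ring, show n + 1 + k = n + k + 1 by ring,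
      show n + (k + 1) = n + k + 1 by ring, Nat.factorial_succ (n + k + 1),
      Nat.factorial_succ (n + k), Nat.add_sub_cancel]
    have : (k.factorial : ℚ) ≠ 0 := by positivity
    have : (k : ℚ) + 1 ≠ 0 := by positivity
    rw [pow_succ (-1 / 9 : ℚ) k, pow_succ (-9 : ℚ) (n + 1), pow_succ (-9 : ℚ) n]
    generalize (-1 / 9 : ℚ) ^ k = w
    generalize (-9 : ℚ) ^ n = z
    push_cast
    rw [hr]
    field_simp
    ring
  · simp
  · simp [iF_zero (show n + 2 < n + 3 by omega)]

lemma sX_eq_sS : ∀ n, sX n = sS n ∧ sX (n + 1) = sS (n + 1) := by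
  intro n
  induction n with
  | zero =>
    have h0 : a 0 = 1 := by decide
    have h1 : a 1 = 3 := by decide
    constructor
    · simp [sX, sS, tX, tS, iF, h0]
    · simp [sX, sS, tX, tS, iF, h0, h1, Finset.sum_range_succ, Nat.factorial]
      norm_num
  | succ n ih =>
    refine ⟨ih.2, ?_⟩
    have h1 := sX_rec n
    have h2 := sS_rec n
    rw [ih.1, ih.2] at h1
    have h3 : ((n : ℚ) + 2) ^ 3 ≠ 0 := by positivity
    apply mul_left_cancel₀ h3
    linear_combination h1 - h2

/-! ### integer form -/

lemma int_identity (n : ℕ) :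
    ∑ k ∈ range (n + 1), ((n + k).choose (2 * k) * (2 * k).choose k * a k : ℤ) * (-9) ^ (n - k)
    = ∑ k ∈ range (n + 1), ((n + 3 * k).choose (4 * k) * (4 * k).choose (2 * k) *
        (2 * k).choose k ^ 2 : ℤ) * (-27) ^ (n - k) := by
  have h := (sX_eq_sS n).1
  have : ((∑ k ∈ range (n + 1),
      ((n + k).choose (2 * k) * (2 * k).choose k * a k : ℤ) * (-9) ^ (n - k) : ℤ) : ℚ)
    = ((∑ k ∈ range (n + 1), ((n + 3 * k).choose (4 * k) * (4 * k).choose (2 * k) *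
        (2 * k).choose k ^ 2 : ℤ) * (-27) ^ (n - k) : ℤ) : ℚ) := by
    push_cast
    convert h using 1
    · apply Finset.sum_congr rfl
      intro k hk
      have hk : k ≤ n := by simp at hk; omega
      obtain ⟨j, rfl⟩ := Nat.exists_eq_add_of_le hk
      rw [tX, choose_central, Nat.cast_choose ℚ (by omega : 2 * k ≤ k + j + k), iF, if_pos hk,
        show k + j + k - 2 * k = j by omega, show k + j - k = j by omega, pow_add,
        show (-9 : ℚ) ^ k * (-9) ^ j * (-1 / 9) ^ k = (-9) ^ j by
          rw [mul_right_comm, ← mul_pow]; norm_num]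
      have : (k.factorial : ℚ) ≠ 0 := by positivity
      have : (j.factorial : ℚ) ≠ 0 := by positivity
      have : ((2 * k).factorial : ℚ) ≠ 0 := by positivity
      field_simp
    · apply Finset.sum_congr rfl
      intro k hk
      have hk : k ≤ n := by simp at hk; omega
      obtain ⟨j, rfl⟩ := Nat.exists_eq_add_of_le hk
      rw [tS, choose_central, Nat.cast_choose ℚ (by omega : 4 * k ≤ k + j + 3 * k),
        Nat.cast_choose ℚ (by omega : 2 * k ≤ 4 * k), iF, if_pos hk,
        show k + j + 3 * k - 4 * k = j by omega, show k + j - k = j by omega,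
        show 4 * k - 2 * k = 2 * k by omega, pow_add,
        show (-27 : ℚ) ^ k * (-27) ^ j * (-1 / 27) ^ k = (-27) ^ j by
          rw [mul_right_comm, ← mul_pow]; norm_num]
      have : (k.factorial : ℚ) ≠ 0 := by positivity
      have : (j.factorial : ℚ) ≠ 0 := by positivity
      have : ((2 * k).factorial : ℚ) ≠ 0 := by positivity
      have : ((4 * k).factorial : ℚ) ≠ 0 := by positivity
      field_simp
  exact_mod_cast this

/-! ### reduction mod `p` -/

lemma choose_neg (p : ℕ) [Fact p.Prime] (m j : ℕ) (h : m + j < p) :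
    ((p - 1 - m).choose j : ZMod p) = (-1) ^ j * ((m + j).choose j : ZMod p) := by
  have hp : p.Prime := Fact.out
  have key : ∀ i, m + i < p → ((p - 1 - m).descFactorial i : ZMod p)
      = (-1) ^ i * ((m + 1).ascFactorial i : ZMod p) := by
    intro i
    induction i with
    | zero => simp
    | succ i ih =>
      intro hi
      rw [Nat.descFactorial_succ, Nat.ascFactorial_succ]
      push_cast
      rw [ih (by omega)]
      have : ((p - 1 - m - i : ℕ) : ZMod p) = -((m : ZMod p) + 1 + i) := by
        have h2 : (p - 1 - m - i) + (m + 1 + i) = p := by omega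
        have h3 := congrArg (Nat.cast : ℕ → ZMod p) h2
        push_cast at h3
        rw [ZMod.natCast_self] at h3
        linear_combination h3
      rw [this]
      ring
  have hj : ((j.factorial : ℕ) : ZMod p) ≠ 0 := by
    rw [Ne, ZMod.natCast_eq_zero_iff, hp.dvd_factorial]
    omega
  have h1 := key j h
  rw [Nat.descFactorial_eq_factorial_mul_choose, Nat.ascFactorial_eq_factorial_mul_choose] at h1
  push_cast at h1
  apply mul_left_cancel₀ hj
  rw [h1]
  ring

/-- expansion of `(1+x)^{-m}` mod `p` -/
lemma inv_expand (p : ℕ) [Fact p.Prime] (m : ℕ) (hm : m < p) (x : ZMod p) (hx : 1 + x ≠ 0) :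
    ((1 + x) ^ m)⁻¹ = ∑ j ∈ range (p - m), (-1) ^ j * ((m + j).choose j : ZMod p) * x ^ j := by
  have hp : p.Prime := Fact.out
  have h1 : ((1 + x) ^ m)⁻¹ = (1 + x) ^ (p - 1 - m) := by
    rw [inv_eq_iff_eq_inv, eq_comm, inv_eq_iff_eq_inv]
    apply eq_inv_of_mul_eq_one_left
    rw [← pow_add, show p - 1 - m + m = p - 1 by omega]
    exact ZMod.pow_card_sub_one_eq_one hx
  rw [h1, add_comm, add_pow, show p - 1 - m + 1 = p - m by omega]
  apply Finset.sum_congr rfl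
  intro j hj
  simp at hj
  rw [← choose_neg p m j (by omega)]
  simp
  ring

/-- general rearrangement -/
lemma rearr (p : ℕ) [Fact p.Prime] (s : ℕ) (hs : 0 < s) (c : ℕ → ZMod p)
    (hc : ∀ k, p ≤ (s + 1) * k → k < p → c k = 0)
    (hv : ∀ n k, k ≤ n → n < p → p ≤ n + s * k →
      ((n + s * k).choose ((s + 1) * k) : ZMod p) * c k = 0)
    (u r q : ZMod p) (hq : 1 + r * u ≠ 0) :
    ∑ k ∈ range p, c k * (u / (q * (1 + r * u) ^ (s + 1))) ^ k
     = ∑ n ∈ range p, u ^ n * ∑ k ∈ range (n + 1),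
        ((n + s * k).choose ((s + 1) * k) : ZMod p) * c k * (q⁻¹) ^ k * (-r) ^ (n - k) := by
  have h1 : ∀ k ∈ range p, c k * (u / (q * (1 + r * u) ^ (s + 1))) ^ k
      = ∑ n ∈ range p, if k ≤ n then u ^ n * (((n + s * k).choose ((s + 1) * k) : ZMod p) * c k
          * (q⁻¹) ^ k * (-r) ^ (n - k)) else 0 := by
    intro k hk
    simp at hk
    by_cases hk2 : p ≤ (s + 1) * k
    · rw [hc k hk2 hk]
      simp
    · push Not at hk2
      have h2 : (u / (q * (1 + r * u) ^ (s + 1))) ^ k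
          = u ^ k * (q⁻¹) ^ k * ((1 + r * u) ^ ((s + 1) * k))⁻¹ := by
        rw [div_pow, mul_pow, ← pow_mul, div_eq_mul_inv, mul_inv, inv_pow]
        ring
      rw [h2, inv_expand p _ hk2 _ hq]
      rw [← Finset.sum_filter]
      have h3 : ∑ n ∈ (range p).filter (fun n => k ≤ n),
          u ^ n * (((n + s * k).choose ((s + 1) * k) : ZMod p) * c k
          * (q⁻¹) ^ k * (-r) ^ (n - k))
          = ∑ n ∈ Finset.Ico k (k + (p - (s + 1) * k)),
          u ^ n * (((n + s * k).choose ((s + 1) * k) : ZMod p) * c k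
          * (q⁻¹) ^ k * (-r) ^ (n - k)) := by
        symm
        have hsk : (s + 1) * k = s * k + k := by ring
        apply Finset.sum_subset
        · intro x hx
          simp at hx ⊢
          omega
        · intro x hx hx2
          simp at hx hx2
          have := hx2 hx.2
          rw [hv x k hx.2 hx.1 (by omega)]
          ring
      rw [h3, Finset.sum_Ico_eq_sum_range, show k + (p - (s + 1) * k) - k = p - (s + 1) * k by omega,
        Finset.mul_sum, Finset.mul_sum]
      apply Finset.sum_congr rfl
      intro j _
      rw [show k + j + s * k = (s + 1) * k + j by ring, show k + j - k = j by omega,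
        Nat.choose_symm_add, neg_pow r, mul_pow]
      ring
  rw [Finset.sum_congr rfl h1, Finset.sum_comm]
  apply Finset.sum_congr rfl
  intro n hn
  simp at hn
  rw [← Finset.sum_filter, Finset.mul_sum]
  apply Finset.sum_congr _ (fun _ _ => rfl)
  ext k
  simp
  omega

lemma zero_of_mul_fact (p : ℕ) [Fact p.Prime] (N d c : ℕ) (h : c * d = N.factorial)
    (hN : p ≤ N) (hd : ¬ p ∣ d) : (c : ZMod p) = 0 := by
  have hp : p.Prime := Fact.out
  rw [ZMod.natCast_eq_zero_iff]
  have : p ∣ c * d := by rw [h]; exact hp.dvd_factorial.2 hN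
  exact (hp.dvd_mul.1 this).resolve_right hd

theorem stmt_9 (p : ℕ) [Fact p.Prime] (hodd : Odd p) (u : ℤ)
    (hu : ¬ (p : ℤ) ∣ u * (u + 1) * (3 * u + 1)) :
    (∑ k ∈ Finset.range p,
        (Nat.choose (2 * k) k : ZMod p) * (a k : ZMod p) *
          ((u : ZMod p) / (9 * (1 + (u : ZMod p)) ^ 2)) ^ k)
      = ∑ k ∈ Finset.range p,
          (Nat.choose (2 * k) k : ZMod p) ^ 2 * (Nat.choose (4 * k) (2 * k) : ZMod p) *
            ((u : ZMod p) / (9 * (1 + 3 * (u : ZMod p)) ^ 4)) ^ k := by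
  have hp : p.Prime := Fact.out
  have hnf : ∀ k, k < p → ¬ p ∣ k.factorial := by
    intro k hk h
    rw [hp.dvd_factorial] at h
    omega
  have hu' : (u : ZMod p) * (u + 1) * (3 * u + 1) ≠ 0 := by
    intro h
    apply hu
    rw [← ZMod.intCast_zmod_eq_zero_iff_dvd]
    push_cast
    exact h
  have hu1 : (1 : ZMod p) + 1 * u ≠ 0 := by
    intro h
    apply hu'
    linear_combination (u : ZMod p) * (3 * u + 1) * h
  have hu3 : (1 : ZMod p) + 3 * u ≠ 0 := by
    intro h
    apply hu'
    linear_combination (u : ZMod p) * (u + 1) * h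
  by_cases h9 : (9 : ZMod p) = 0
  · simp only [h9, zero_mul, div_zero]
    rw [Finset.sum_eq_single_of_mem 0 (by simp [hp.pos]), Finset.sum_eq_single_of_mem 0 (by simp [hp.pos])]
    · simp [show a 0 = 1 by decide]
    · intro b _ hb; simp [hb]
    · intro b _ hb; simp [hb]
  -- factorial forms
  have f2 : ∀ k, (2 * k).choose k * (k.factorial * k.factorial) = (2 * k).factorial := by
    intro k
    have := Nat.choose_mul_factorial_mul_factorial (show k ≤ 2 * k by omega)
    rw [show 2 * k - k = k by omega] at this
    rw [← this]; ring
  have f4 : ∀ k, (4 * k).choose (2 * k) * ((2 * k).factorial * (2 * k).factorial)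
      = (4 * k).factorial := by
    intro k
    have := Nat.choose_mul_factorial_mul_factorial (show 2 * k ≤ 4 * k by omega)
    rw [show 4 * k - 2 * k = 2 * k by omega] at this
    rw [← this]; ring
  have f4' : ∀ k, ((2 * k).choose k ^ 2 * (4 * k).choose (2 * k)) *
      (k.factorial * k.factorial * (k.factorial * k.factorial)) = (4 * k).factorial := by
    intro k
    rw [← f4 k, ← f2 k]
    ring
  have hd4 : ∀ k, k < p → ¬ p ∣ k.factorial * k.factorial * (k.factorial * k.factorial) := by
    intro k hk
    simp [hp.dvd_mul, hnf k hk]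
  have A := rearr p 1 (by norm_num) (fun k => ((2 * k).choose k : ZMod p) * (a k : ZMod p))
    (by
      intro k hk hkp
      have := zero_of_mul_fact p _ _ _ (f2 k) (by omega) (by simp [hp.dvd_mul, hnf k hkp])
      simp [this])
    (by
      intro n k hk hn hnk
      have e : ((n + 1 * k).choose (2 * k) * (2 * k).choose k) *
          (k.factorial * k.factorial * (n - k).factorial) = (n + 1 * k).factorial := by
        have := Nat.choose_mul_factorial_mul_factorial (show 2 * k ≤ n + 1 * k by omega)
        rw [show n + 1 * k - 2 * k = n - k by omega] at this
        rw [← this, ← f2 k]; ring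
      have := zero_of_mul_fact p _ _ _ e hnk
        (by simp [hp.dvd_mul, hnf k (by omega), hnf (n - k) (by omega)])
      push_cast at this
      rw [show (1 + 1) * k = 2 * k by ring, ← mul_assoc, this, zero_mul])
    (u : ZMod p) 1 9 hu1
  have B := rearr p 3 (by norm_num)
    (fun k => ((2 * k).choose k : ZMod p) ^ 2 * ((4 * k).choose (2 * k) : ZMod p))
    (by
      intro k hk hkp
      have := zero_of_mul_fact p _ _ _ (f4' k) (by omega) (hd4 k hkp)
      push_cast at this
      exact this)
    (by
      intro n k hk hn hnk
      have e : ((n + 3 * k).choose (4 * k) * ((2 * k).choose k ^ 2 * (4 * k).choose (2 * k))) *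
          (k.factorial * k.factorial * (k.factorial * k.factorial) * (n - k).factorial)
          = (n + 3 * k).factorial := by
        have := Nat.choose_mul_factorial_mul_factorial (show 4 * k ≤ n + 3 * k by omega)
        rw [show n + 3 * k - 4 * k = n - k by omega] at this
        rw [← this, ← f4' k]; ring
      have := zero_of_mul_fact p _ _ _ e hnk
        (by
          rw [hp.dvd_mul, not_or]
          exact ⟨hd4 k (by omega), hnf (n - k) (by omega)⟩)
      push_cast at this
      exact this)
    (u : ZMod p) 3 9 hu3
  simp only [one_mul] at A
  simp only [Nat.reduceAdd] at A B
  rw [A, B]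
  apply Finset.sum_congr rfl
  intro n _
  congr 1
  have hI := congrArg (Int.cast : ℤ → ZMod p) (int_identity n)
  push_cast at hI
  have h9n : (9 : ZMod p) ^ n ≠ 0 := pow_ne_zero _ h9
  apply mul_left_cancel₀ h9n
  rw [Finset.mul_sum, Finset.mul_sum]
  have hpow : ∀ k ∈ range (n + 1), (9 : ZMod p) ^ n * (9⁻¹) ^ k = 9 ^ (n - k) := by
    intro k hk
    simp at hk
    rw [inv_pow, pow_sub₀ _ h9 (by omega)]
  convert hI using 1
  · apply Finset.sum_congr rfl
    intro k hk
    rw [show (-9 : ZMod p) = 9 * (-1) by ring, mul_pow, ← hpow k hk]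
    ring
  · apply Finset.sum_congr rfl
    intro k hk
    rw [show (-27 : ZMod p) = 9 * (-3) by ring, mul_pow, ← hpow k hk]
    ring
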